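/- Let V_1, …, V_d be pairwise disjoint sets covering V and let p_1, …, p_d be fully separable topic influence probability functions with respect to this partition. Let λ_1, …, λ_d ∈ [0,1] and p = Σ_{j=1}^{d} λ_j p_j (pointwise). Then the marginal influence of a node localizes to its own part: for every topic i, every v ∈ V_i, and every S ⊆ V, MI(v | S, p) = MI(v | S ∩ V_i, λ_i p_i). -/

import Mathlib

open scoped Classical

/-- Weight of a live-edge set `L` under influence probability function `p`:
the product over all ordered pairs `(u,v)` with `u ≠ v` of `p u v` if the
edge is live and `1 - p u v` otherwise. -/
noncomputable def edgeWeight {V : Type*} [Fintype V] [DecidableEq V]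
    (p : V → V → ℝ) (L : Finset (V × V)) : ℝ :=
  ∏ e ∈ (Finset.univ : Finset V).offDiag, (if e ∈ L then p e.1 e.2 else 1 - p e.1 e.2)

/-- The set of vertices reachable from some vertex of `S` via edges of the
live-edge set `L` (reflexive–transitive closure). -/
noncomputable def reachSet {V : Type*} [Fintype V] [DecidableEq V]
    (S : Finset V) (L : Finset (V × V)) : Finset V :=
  Finset.univ.filter (fun x => ∃ s ∈ S, Relation.ReflTransGen (fun a b => (a, b) ∈ L) s x)

/-- Influence spread `σ(S, p)`: the sum over all live-edge sets `L`
(subsets of the off-diagonal pairs) of `w(p,L) * |R(S,L)|`. -/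
noncomputable def infSpread {V : Type*} [Fintype V] [DecidableEq V]
    (S : Finset V) (p : V → V → ℝ) : ℝ :=
  ∑ L ∈ ((Finset.univ : Finset V).offDiag).powerset, edgeWeight p L * (reachSet S L).card

/-- Marginal influence `MI(v | S, p) = σ(S ∪ {v}, p) − σ(S, p)`. -/
noncomputable def marginInf {V : Type*} [Fintype V] [DecidableEq V]
    (v : V) (S : Finset V) (p : V → V → ℝ) : ℝ :=
  infSpread (insert v S) p - infSpread S p

/-!
Adding `v` to `S` gains exactly the vertices reachable from `v` but not from `S`. A live-edge set
of nonzero weight has no edge crossing the boundary of `v`'s own part, so these vertices all lie in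
that part and depend only on the seeds and live edges inside it. All other edges then sum out of
the expectation, since each contributes a factor `p + (1 - p) = 1`.
-/

section BernoulliWeight

variable {α R : Type*} [DecidableEq α] [CommRing R]

/-- The weight of the outcome `L` when each `e ∈ E` is selected independently with weight `q e`.
Only `L ∩ E` matters. The weights lie in a commutative ring and need not be probabilities. -/
def bernoulliWeight (q : α → R) (E L : Finset α) : R :=
  ∏ e ∈ E, if e ∈ L then q e else 1 - q e

theorem bernoulliWeight_congr {q q' : α → R} {E : Finset α} (h : ∀ e ∈ E, q e = q' e)
    (L : Finset α) : bernoulliWeight q E L = bernoulliWeight q' E L :=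
  Finset.prod_congr rfl fun e he => by rw [h e he]

theorem bernoulliWeight_insert_right {q : α → R} {E : Finset α} {a : α} (ha : a ∉ E)
    (L : Finset α) : bernoulliWeight q E (insert a L) = bernoulliWeight q E L := by
  refine Finset.prod_congr rfl fun e he => ?_
  have hea : e ≠ a := ne_of_mem_of_not_mem he ha
  simp only [Finset.mem_insert, hea, false_or]

theorem sum_bernoulliWeight_insert_mul (q : α → R) {E : Finset α} {a : α} (ha : a ∉ E)
    (g : Finset α → R) :
    ∑ L ∈ (insert a E).powerset, bernoulliWeight q (insert a E) L * g L =
      ∑ L ∈ E.powerset, bernoulliWeight q E L * ((1 - q a) * g L + q a * g (insert a L)) := by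
  rw [Finset.sum_powerset_insert ha, ← Finset.sum_add_distrib]
  refine Finset.sum_congr rfl fun L hL => ?_
  have haL : a ∉ L := Finset.notMem_of_mem_powerset_of_notMem hL ha
  have without_a : bernoulliWeight q (insert a E) L = (1 - q a) * bernoulliWeight q E L := by
    rw [bernoulliWeight, Finset.prod_insert ha, if_neg haL, bernoulliWeight]
  have with_a : bernoulliWeight q (insert a E) (insert a L) = q a * bernoulliWeight q E L := by
    rw [bernoulliWeight, Finset.prod_insert ha, if_pos (Finset.mem_insert_self a L),
      ← bernoulliWeight, bernoulliWeight_insert_right ha]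
  rw [without_a, with_a]
  ring

theorem sum_bernoulliWeight_mul_inter (q : α → R) {E F : Finset α} (hEF : E ⊆ F)
    (g : Finset α → R) :
    ∑ L ∈ F.powerset, bernoulliWeight q F L * g (L ∩ E) =
      ∑ L ∈ E.powerset, bernoulliWeight q E L * g L := by
  obtain ⟨C, hEC, rfl⟩ : ∃ C, Disjoint E C ∧ E ∪ C = F :=
    ⟨F \ E, Finset.disjoint_sdiff, Finset.union_sdiff_of_subset hEF⟩
  clear hEF
  induction C using Finset.induction_on with
  | empty =>
    rw [Finset.union_empty]
    refine Finset.sum_congr rfl fun L hL => ?_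
    rw [Finset.inter_eq_left.2 (Finset.mem_powerset.1 hL)]
  | insert a C haC ih =>
    obtain ⟨haE, hEC⟩ := Finset.disjoint_insert_right.1 hEC
    have ha : a ∉ E ∪ C := by simp only [Finset.mem_union, haE, haC, or_self, not_false_eq_true]
    rw [Finset.union_insert, sum_bernoulliWeight_insert_mul q ha, ← ih hEC]
    refine Finset.sum_congr rfl fun L _ => ?_
    rw [Finset.insert_inter_of_notMem haE]
    ring

end BernoulliWeight

section Isolated

variable {α : Type*} {r : α → α → Prop} {A : Set α} {x y : α}

/-- No step of `r` enters or leaves `A`. Applied to the live edges of an outcome and to the support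
of an influence function, with `r a b` read as "there is an edge from `a` to `b`". -/
def IsIsolated (r : α → α → Prop) (A : Set α) : Prop :=
  ∀ ⦃a b⦄, r a b → (a ∈ A ↔ b ∈ A)

theorem IsIsolated.mem_iff_of_reflTransGen (h : IsIsolated r A)
    (hxy : Relation.ReflTransGen r x y) : x ∈ A ↔ y ∈ A := by
  induction hxy with
  | refl => exact Iff.rfl
  | tail _ hbc ih => exact ih.trans (h hbc)

theorem IsIsolated.reflTransGen_restrict_iff (h : IsIsolated r A) (hx : x ∈ A) :
    Relation.ReflTransGen (fun a b => r a b ∧ a ∈ A ∧ b ∈ A ∧ a ≠ b) x y ↔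
      Relation.ReflTransGen r x y := by
  refine ⟨Relation.ReflTransGen.mono (fun _ _ hab => hab.1) x y, fun hxy => ?_⟩
  induction hxy with
  | refl => exact Relation.ReflTransGen.refl
  | @tail b c hxb hbc ih =>
    obtain rfl | hne := eq_or_ne b c
    · exact ih
    · have hb : b ∈ A := (h.mem_iff_of_reflTransGen hxb).1 hx
      exact ih.tail ⟨hbc, hb, (h hbc).1 hb, hne⟩

end Isolated

section Influence

variable {V : Type*} [Fintype V] [DecidableEq V]
  {v x : V} {S T A : Finset V} {L : Finset (V × V)} {p q : V → V → ℝ}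

theorem edgeWeight_eq_bernoulliWeight (p : V → V → ℝ) (L : Finset (V × V)) :
    edgeWeight p L = bernoulliWeight (fun e => p e.1 e.2) (Finset.univ : Finset V).offDiag L :=
  rfl

theorem mem_reachSet :
    x ∈ reachSet S L ↔ ∃ s ∈ S, Relation.ReflTransGen (fun a b => (a, b) ∈ L) s x :=
  Finset.mem_filter_univ x

theorem reachSet_union (S T : Finset V) (L : Finset (V × V)) :
    reachSet (S ∪ T) L = reachSet S L ∪ reachSet T L := by
  ext x
  simp only [mem_reachSet, Finset.mem_union, or_and_right, exists_or]

theorem marginInf_eq_sum_card_sdiff (v : V) (S : Finset V) (p : V → V → ℝ) :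
    marginInf v S p = ∑ L ∈ (Finset.univ : Finset V).offDiag.powerset,
      edgeWeight p L * (reachSet {v} L \ reachSet S L).card := by
  rw [marginInf, infSpread, infSpread, ← Finset.sum_sub_distrib]
  refine Finset.sum_congr rfl fun L _ => ?_
  rw [Finset.insert_eq, reachSet_union, ← Finset.card_sdiff_add_card, Nat.cast_add]
  ring

theorem reachSet_inter_of_isIsolated (hL : IsIsolated (fun a b => (a, b) ∈ L) A) (S : Finset V) :
    reachSet S L ∩ A = reachSet (S ∩ A) (L ∩ A.offDiag) := by
  have reach_iff {s x : V} (hs : s ∈ A) :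
      Relation.ReflTransGen (fun a b => (a, b) ∈ L ∩ A.offDiag) s x ↔
        Relation.ReflTransGen (fun a b => (a, b) ∈ L) s x := by
    simpa only [Finset.mem_inter, Finset.mem_offDiag, Finset.mem_coe] using
      hL.reflTransGen_restrict_iff hs
  ext x
  rw [Finset.mem_inter, mem_reachSet, mem_reachSet]
  constructor
  · rintro ⟨⟨s, hsS, hsx⟩, hx⟩
    have hsA : s ∈ A := (hL.mem_iff_of_reflTransGen hsx).2 hx
    exact ⟨s, Finset.mem_inter.2 ⟨hsS, hsA⟩, (reach_iff hsA).2 hsx⟩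
  · rintro ⟨s, hs, hsx⟩
    obtain ⟨hsS, hsA⟩ := Finset.mem_inter.1 hs
    have hsx_full := (reach_iff hsA).1 hsx
    exact ⟨⟨s, hsS, hsx_full⟩, (hL.mem_iff_of_reflTransGen hsx_full).1 hsA⟩

theorem reachSet_subset_of_isIsolated (hL : IsIsolated (fun a b => (a, b) ∈ L) A) (hS : S ⊆ A) :
    reachSet S L ⊆ A := fun x hx => by
  obtain ⟨s, hs, hsx⟩ := mem_reachSet.1 hx
  exact (hL.mem_iff_of_reflTransGen hsx).1 (hS hs)

theorem reachSet_sdiff_of_isIsolated (hL : IsIsolated (fun a b => (a, b) ∈ L) A) (hT : T ⊆ A)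
    (S : Finset V) :
    reachSet T L \ reachSet S L =
      reachSet T (L ∩ A.offDiag) \ reachSet (S ∩ A) (L ∩ A.offDiag) :=
  have gain_subset : reachSet T L \ reachSet S L ⊆ A :=
    Finset.sdiff_subset.trans (reachSet_subset_of_isIsolated hL hT)
  calc reachSet T L \ reachSet S L
      = (reachSet T L \ reachSet S L) ∩ A := (Finset.inter_eq_left.2 gain_subset).symm
    _ = (reachSet T L ∩ A) \ (reachSet S L ∩ A) := inf_sdiff_distrib_right _ _ _
    _ = reachSet T (L ∩ A.offDiag) \ reachSet (S ∩ A) (L ∩ A.offDiag) := by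
      rw [reachSet_inter_of_isIsolated hL, reachSet_inter_of_isIsolated hL,
        Finset.inter_eq_left.2 hT]

theorem isIsolated_of_edgeWeight_ne_zero {A : Set V} (hp : IsIsolated (fun a b => p a b ≠ 0) A)
    (hL : L ⊆ (Finset.univ : Finset V).offDiag) (hw : edgeWeight p L ≠ 0) :
    IsIsolated (fun a b => (a, b) ∈ L) A := fun a b hab => by
  have hfactor := Finset.prod_ne_zero_iff.1 hw (a, b) (hL hab)
  rw [if_pos hab] at hfactor
  exact hp hfactor

theorem marginInf_eq_sum_of_isIsolated (hp : IsIsolated (fun a b => p a b ≠ 0) A) (hv : v ∈ A)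
    (S : Finset V) :
    marginInf v S p = ∑ L ∈ A.offDiag.powerset,
      bernoulliWeight (fun e => p e.1 e.2) A.offDiag L *
        (reachSet {v} L \ reachSet (S ∩ A) L).card := by
  rw [marginInf_eq_sum_card_sdiff, ← sum_bernoulliWeight_mul_inter _
    (Finset.offDiag_mono (Finset.subset_univ A))
    (fun L => ((reachSet {v} L \ reachSet (S ∩ A) L).card : ℝ))]
  refine Finset.sum_congr rfl fun L hL => ?_
  rw [← edgeWeight_eq_bernoulliWeight]
  obtain hw | hw := eq_or_ne (edgeWeight p L) 0
  · rw [hw, zero_mul, zero_mul]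
  · have hLA := isIsolated_of_edgeWeight_ne_zero hp (Finset.mem_powerset.1 hL) hw
    rw [reachSet_sdiff_of_isIsolated hLA (Finset.singleton_subset_iff.2 hv)]

theorem marginInf_eq_marginInf_inter_of_isIsolated (hp : IsIsolated (fun a b => p a b ≠ 0) A)
    (hq : IsIsolated (fun a b => q a b ≠ 0) A) (hpq : ∀ a ∈ A, ∀ b ∈ A, p a b = q a b)
    (hv : v ∈ A) (S : Finset V) : marginInf v S p = marginInf v (S ∩ A) q := by
  rw [marginInf_eq_sum_of_isIsolated hp hv, marginInf_eq_sum_of_isIsolated hq hv,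
    Finset.inter_assoc, Finset.inter_self]
  refine Finset.sum_congr rfl fun L _ => ?_
  congr 1
  refine bernoulliWeight_congr (fun e he => ?_) L
  obtain ⟨ha, hb, -⟩ := Finset.mem_offDiag.1 he
  exact hpq e.1 ha e.2 hb

theorem marginInf_localizes_general {ι : Type*} [Fintype ι] {parts : ι → Finset V}
    (hdisj : Pairwise fun i j => Disjoint (parts i) (parts j)) {q : ι → V → V → ℝ}
    (hsep : ∀ i u w, q i u w ≠ 0 → u ∈ parts i ∧ w ∈ parts i)
    (hp : ∀ u w, p u w = ∑ j, q j u w) {i : ι} (hv : v ∈ parts i) (S : Finset V) :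
    marginInf v S p = marginInf v (S ∩ parts i) (q i) := by
  have isolated_q (j : ι) : IsIsolated (fun a b => q j a b ≠ 0) (parts i : Set V) := by
    intro a b hab
    obtain ⟨ha, hb⟩ := hsep j a b hab
    obtain rfl | hji := eq_or_ne j i
    · exact iff_of_true ha hb
    · have hd := Finset.disjoint_left.1 (hdisj hji)
      exact iff_of_false (hd ha) (hd hb)
  have isolated_p : IsIsolated (fun a b => p a b ≠ 0) (parts i : Set V) := by
    intro a b hab
    obtain ⟨j, -, hj⟩ := Finset.exists_ne_zero_of_sum_ne_zero (hp a b ▸ hab)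
    exact isolated_q j hj
  have p_eq_q : ∀ a ∈ parts i, ∀ b ∈ parts i, p a b = q i a b := fun a ha b _ => by
    rw [hp]
    refine Fintype.sum_eq_single i fun j hji => ?_
    by_contra hj
    exact Finset.disjoint_left.1 (hdisj hji) (hsep j a b hj).1 ha
  exact marginInf_eq_marginInf_inter_of_isIsolated isolated_p (isolated_q i) p_eq_q hv S

end Influence

/-- In a fully separable network, the marginal influence of a node localizes to
its own part. -/
theorem marginInf_localizes {V : Type*} [Fintype V] [DecidableEq V] {d : ℕ}
    (parts : Fin d → Finset V)
    (hdisj : ∀ i j, i ≠ j → Disjoint (parts i) (parts j))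
    (hcover : ∀ x : V, ∃ i, x ∈ parts i)
    (pt : Fin d → V → V → ℝ)
    (hpt1 : ∀ i u v, 0 ≤ pt i u v ∧ pt i u v ≤ 1) (hpt2 : ∀ i v, pt i v v = 0)
    (hsep : ∀ i u v, pt i u v ≠ 0 → u ∈ parts i ∧ v ∈ parts i)
    (lam : Fin d → ℝ) (hlam : ∀ i, 0 ≤ lam i ∧ lam i ≤ 1)
    (p : V → V → ℝ) (hpdef : ∀ u w, p u w = ∑ j, lam j * pt j u w) :
    ∀ i : Fin d, ∀ v ∈ parts i, ∀ S : Finset V,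
      marginInf v S p = marginInf v (S ∩ parts i) (fun u w => lam i * pt i u w) :=
  fun _ _ hv S => marginInf_localizes_general (fun i j => hdisj i j)
    (fun j u w h => hsep j u w (right_ne_zero_of_mul h)) hpdef hv S
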